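/- Let k be an algebraically closed field of characteristic 0. The invariants J_2, J_3, J_4, J_5, J_6, J_7, viewed as polynomials in the coefficients a_0,...,a_8 of a generic binary octavic, are algebraically independent over k: if P ∈ k[X_1,...,X_6] satisfies P(J_2, J_3, J_4, J_5, J_6, J_7) = 0 in k[a_0,...,a_8], then P = 0. -/

import Mathlib

noncomputable section

open MvPolynomial


variable (k : Type*) [Field k]

/-- the r-th transvectant of binary forms over a k-algebra R, for forms of degrees n, m -/
def transvectantA (R : Type*) [CommRing R] [Algebra k R] (n m r : ℕ)
    (f g : MvPolynomial (Fin 2) R) : MvPolynomial (Fin 2) R :=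
  C (algebraMap k R ((((m - r).factorial * (n - r).factorial : ℕ) : k) /
      ((n.factorial * m.factorial : ℕ) : k))) *
    ∑ j ∈ Finset.range (r + 1),
      C ((-1 : R) ^ j * (r.choose j : R)) *
        ((fun p => pderiv (0 : Fin 2) p)^[r - j] ((fun p => pderiv (1 : Fin 2) p)^[j] f)) *
        ((fun p => pderiv (0 : Fin 2) p)^[j] ((fun p => pderiv (1 : Fin 2) p)^[r - j] g))

/-- the generic binary octavic, with coefficients the variables a_0, ..., a_8 -/
def genOct : MvPolynomial (Fin 2) (MvPolynomial (Fin 9) k) :=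
  ∑ i : Fin 9, C (X i) * X 0 ^ (i : ℕ) * X 1 ^ (8 - (i : ℕ))

def covgP := transvectantA k (MvPolynomial (Fin 9) k) 8 8 4 (genOct k) (genOct k)
def covkP := transvectantA k (MvPolynomial (Fin 9) k) 8 8 6 (genOct k) (genOct k)
def covhP := transvectantA k (MvPolynomial (Fin 9) k) 4 4 2 (covkP k) (covkP k)
def covmP := transvectantA k (MvPolynomial (Fin 9) k) 8 4 4 (genOct k) (covkP k)

/-- J_2 as a polynomial in the coefficients a_0, ..., a_8 -/
def JP2 : MvPolynomial (Fin 9) k :=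
  (2 ^ 2 * 5 * 7 : MvPolynomial (Fin 9) k) *
    constantCoeff (transvectantA k (MvPolynomial (Fin 9) k) 8 8 8 (genOct k) (genOct k))
def JP3 : MvPolynomial (Fin 9) k :=
  C ((2 ^ 4 * 5 ^ 2 * 7 ^ 3 : k) / 3) *
    constantCoeff (transvectantA k (MvPolynomial (Fin 9) k) 8 8 8 (genOct k) (covgP k))
def JP4 : MvPolynomial (Fin 9) k :=
  (2 ^ 9 * 3 * 7 ^ 4 : MvPolynomial (Fin 9) k) *
    constantCoeff (transvectantA k (MvPolynomial (Fin 9) k) 4 4 4 (covkP k) (covkP k))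
def JP5 : MvPolynomial (Fin 9) k :=
  (2 ^ 9 * 5 * 7 ^ 5 : MvPolynomial (Fin 9) k) *
    constantCoeff (transvectantA k (MvPolynomial (Fin 9) k) 4 4 4 (covmP k) (covkP k))
def JP6 : MvPolynomial (Fin 9) k :=
  (2 ^ 14 * 3 ^ 2 * 7 ^ 6 : MvPolynomial (Fin 9) k) *
    constantCoeff (transvectantA k (MvPolynomial (Fin 9) k) 4 4 4 (covkP k) (covhP k))
def JP7 : MvPolynomial (Fin 9) k :=
  (2 ^ 14 * 3 * 5 * 7 ^ 7 : MvPolynomial (Fin 9) k) *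
    constantCoeff (transvectantA k (MvPolynomial (Fin 9) k) 4 4 4 (covmP k) (covhP k))

/-!
By the Jacobian criterion it suffices to find one octavic `f` and six directions `v_j` such that
the matrix of derivatives of `J_i` at `f` along `v_j` is invertible; these derivatives are the
`ε`-parts of `J_i (f + ε v_j)` over the dual numbers. The criterion itself holds because the
derivatives of a polynomial relation of least degree would again be relations, so that a relation
has to be constant.

Writing binary forms as `∑ i, (n choose i) c_i X ^ i Y ^ (n - i)`, differentiation merely shifts
`c`, up to an integer factor, so that transvectants become integral bilinear expressions in the
coefficient sequences, up to rational factors. This reduces the claim to a computation in `ℤ[ε]`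
at a sparse octavic.
-/

section JacobianCriterion

variable {R A M ι σ : Type*} [CommRing R]

theorem eq_C_of_forall_pderiv_eq_zero [IsAddTorsionFree R] {p : MvPolynomial σ R}
    (hp : ∀ i, pderiv i p = 0) : p = C (coeff 0 p) := by
  classical
  ext m
  rw [coeff_C]
  split_ifs with hm
  · rw [hm]
  obtain ⟨i, hi⟩ := Finsupp.ne_iff.mp (Ne.symm hm)
  have hsub : m - Finsupp.single i 1 + Finsupp.single i 1 = m :=
    tsub_add_cancel_of_le (Finsupp.single_le_iff.mpr (Nat.one_le_iff_ne_zero.mpr hi))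
  have hcoeff := coeff_pderiv (i := i) p (m - Finsupp.single i 1)
  rw [hp, coeff_zero, hsub, ← Nat.cast_succ, ← nsmul_eq_mul'] at hcoeff
  exact (nsmul_eq_zero_iff_right (Nat.succ_ne_zero _)).mp hcoeff.symm

theorem totalDegree_pderiv_le (i : σ) (p : MvPolynomial σ R) :
    (pderiv i p).totalDegree ≤ p.totalDegree - 1 := by
  refine Finset.sup_le fun m hm ↦ Nat.le_sub_one_of_lt ?_
  rw [mem_support_iff, coeff_pderiv] at hm
  have hle : (m + Finsupp.single i 1).degree ≤ p.totalDegree :=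
    le_totalDegree (mem_support_iff.mpr (left_ne_zero_of_mul hm))
  rwa [map_add, Finsupp.degree_single] at hle

variable [CommRing A] [Algebra R A]

theorem derivation_aeval [AddCommGroup M] [Module A M] [Module R M] [Fintype ι]
    (D : Derivation R A M) (x : ι → A) (p : MvPolynomial ι R) :
    D (aeval x p) = ∑ i, aeval x (pderiv i p) • D (x i) := by
  classical
  induction p using MvPolynomial.induction_on with
  | C a => simp
  | add p q hp hq => simp only [map_add, hp, hq, add_smul, Finset.sum_add_distrib]
  | mul_X p n hp =>
    simp [hp, pderiv_X, Pi.single_apply, add_smul, Finset.sum_add_distrib, Finset.smul_sum,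
      mul_smul, apply_ite (aeval x)]

theorem algebraicIndependent_of_linearIndependent_D [IsAddTorsionFree R] [FaithfulSMul R A]
    {x : ι → A} (hx : LinearIndependent A fun i ↦ KaehlerDifferential.D R A (x i)) :
    AlgebraicIndependent R x := by
  refine algebraicIndependent_of_finite_type fun t ht ↦ ?_
  have := ht.fintype
  set y : t → A := fun i ↦ x i
  have hy : LinearIndependent A fun i ↦ KaehlerDifferential.D R A (y i) :=
    hx.comp ((↑) : t → ι) Subtype.val_injective
  rw [algebraicIndependent_iff]
  intro p
  induction hn : p.totalDegree using Nat.strong_induction_on generalizing p with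
  | _ n ih =>
    intro hp
    have hgrad : ∀ i, aeval y (pderiv i p) = 0 := Fintype.linearIndependent_iff.mp hy _ <| by
      rw [← derivation_aeval, hp, map_zero]
    have hconst : p = C (coeff 0 p) := by
      by_cases hdeg : p.totalDegree = 0
      · exact totalDegree_eq_zero_iff_eq_C.mp hdeg
      · refine eq_C_of_forall_pderiv_eq_zero fun i ↦ ih _ ?_ _ rfl (hgrad i)
        have := totalDegree_pderiv_le i p
        omega
    rw [hconst, aeval_C, FaithfulSMul.algebraMap_eq_zero_iff] at hp
    rw [hconst, hp, C_0]

theorem algebraicIndependent_of_det_derivation_ne_zero [IsAddTorsionFree R] [FaithfulSMul R A]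
    [IsDomain A] [Fintype ι] [DecidableEq ι] {x : ι → A} (D : ι → Derivation R A A)
    (hdet : (Matrix.of fun i j ↦ D j (x i)).det ≠ 0) : AlgebraicIndependent R x := by
  have hrows : LinearIndependent A fun i j ↦ D j (x i) :=
    Matrix.linearIndependent_rows_of_det_ne_zero hdet
  refine algebraicIndependent_of_linearIndependent_D
    (.of_comp (LinearMap.pi fun j ↦ (D j).liftKaehlerDifferential) ?_)
  change LinearIndependent A fun i j ↦ (D j).liftKaehlerDifferential (.D R A (x i))
  simpa only [Derivation.liftKaehlerDifferential_comp_D] using hrows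

open TrivSqZeroExt DualNumber

variable {a : σ → R}

theorem fst_algHom_dualNumber (φ : MvPolynomial σ R →ₐ[R] R[ε])
    (hφ : ∀ s, (φ (X s)).fst = a s) (p : MvPolynomial σ R) : (φ p).fst = eval a p := by
  rw [← funext hφ]
  exact DFunLike.congr_fun (aeval_unique ((fstHom R R R).comp φ)) p

theorem snd_algHom_dualNumber (φ : MvPolynomial σ R →ₐ[R] R[ε])
    (hφ : ∀ s, (φ (X s)).fst = a s) (p : MvPolynomial σ R) :
    (φ p).snd = eval a (mkDerivation R (fun s ↦ C (φ (X s)).snd) p) := by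
  induction p using MvPolynomial.induction_on with
  | C r => simp [← algebraMap_eq, algebraMap_eq_inl]
  | add p q hp hq => simp only [map_add, snd_add, hp, hq]
  | mul_X p s hp => simp [hp, hφ, fst_algHom_dualNumber φ hφ, Derivation.leibniz, mul_comm]

theorem algebraicIndependent_of_det_snd_ne_zero [IsDomain R] [IsAddTorsionFree R] [Fintype ι]
    [DecidableEq ι] {x : ι → MvPolynomial σ R} (φ : ι → MvPolynomial σ R →ₐ[R] R[ε])
    (hφ : ∀ j s, (φ j (X s)).fst = a s)
    (hdet : (Matrix.of fun i j ↦ (φ j (x i)).snd).det ≠ 0) : AlgebraicIndependent R x := by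
  refine algebraicIndependent_of_det_derivation_ne_zero
    (fun j ↦ mkDerivation R fun s ↦ C (φ j (X s)).snd) (ne_zero_of_map (f := eval a) ?_)
  rw [RingHom.map_det]
  convert hdet using 2
  ext i j
  exact (snd_algHom_dualNumber (φ j) (hφ j) (x i)).symm

end JacobianCriterion

section Transvectant

open Finset

variable {R S : Type*} [CommRing R] [CommRing S]

/-- The polynomial `∑ i, (n choose i) c_i X ^ i`, of which `binaryForm n c` is the
homogenisation. -/
def binomialPolynomial (n : ℕ) : (ℕ → R) →ₗ[R] Polynomial R :=
  ∑ i ∈ range (n + 1), n.choose i • Polynomial.monomial i ∘ₗ LinearMap.proj i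

theorem coeff_binomialPolynomial (n : ℕ) (c : ℕ → R) (i : ℕ) :
    (binomialPolynomial n c).coeff i = n.choose i * c i := by
  simp +contextual [binomialPolynomial, Polynomial.coeff_monomial, Nat.choose_eq_zero_of_lt]

theorem natDegree_binomialPolynomial_le (n : ℕ) (c : ℕ → R) :
    (binomialPolynomial n c).natDegree ≤ n :=
  Polynomial.natDegree_le_iff_coeff_eq_zero.mpr fun i hi ↦ by
    simp [coeff_binomialPolynomial, Nat.choose_eq_zero_of_lt hi]

/-- The binary form `∑ i, (n choose i) c_i X ^ i Y ^ (n - i)` of degree `n`. Its coefficients are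
normalised by binomials because differentiation then merely shifts the sequence `c`. -/
def binaryForm (n : ℕ) : (ℕ → R) →ₗ[R] MvPolynomial (Fin 2) R :=
  Polynomial.homogenizeLM n ∘ₗ binomialPolynomial n

theorem coeff_binaryForm (n : ℕ) (c : ℕ → R) (m : Fin 2 →₀ ℕ) :
    coeff m (binaryForm n c) = if m 0 + m 1 = n then n.choose (m 0) * c (m 0) else 0 := by
  simp [binaryForm, Polynomial.coeff_homogenize, coeff_binomialPolynomial]

theorem binaryForm_apply (n : ℕ) (c : ℕ → R) :
    binaryForm n c =
      ∑ i ∈ range (n + 1), C (n.choose i * c i) * X 0 ^ i * X 1 ^ (n - i) := by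
  rw [binaryForm, LinearMap.comp_apply, binomialPolynomial, LinearMap.sum_apply, map_sum]
  refine sum_congr rfl fun i hi ↦ ?_
  rw [LinearMap.smul_apply, LinearMap.comp_apply, LinearMap.proj_apply, ← map_nsmul,
    Polynomial.homogenizeLM_apply, Polynomial.homogenize_monomial (mem_range_succ_iff.mp hi),
    nsmul_eq_mul, monomial_eq, Finsupp.prod_fintype _ _ (by simp)]
  simp [mul_assoc]

theorem pderiv_zero_binaryForm (n : ℕ) (c : ℕ → R) :
    pderiv 0 (binaryForm (n + 1) c) = (n + 1) • binaryForm n fun i ↦ c (i + 1) := by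
  ext m
  have hchoose : ((n + 1).choose (m 0 + 1) * (m 0 + 1) : R) = (n + 1) * n.choose (m 0) := by
    exact_mod_cast congrArg Nat.cast (Nat.add_one_mul_choose_eq n (m 0)).symm
  have hdeg : m 0 + 1 + m 1 = n + 1 ↔ m 0 + m 1 = n := by omega
  simp only [coeff_pderiv, coeff_smul, coeff_binaryForm, Finsupp.add_apply, Finsupp.single_apply,
    if_true, zero_ne_one, if_false, add_zero, hdeg]
  split_ifs
  · rw [mul_right_comm, hchoose, nsmul_eq_mul, Nat.cast_succ, mul_assoc]
  · simp

theorem pderiv_one_binaryForm (n : ℕ) (c : ℕ → R) :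
    pderiv 1 (binaryForm (n + 1) c) = (n + 1) • binaryForm n c := by
  ext m
  simp only [coeff_pderiv, coeff_smul, coeff_binaryForm, Finsupp.add_apply, Finsupp.single_apply,
    if_true, one_ne_zero, if_false, add_zero, ← add_assoc, add_left_inj]
  split_ifs with hm
  · have hchoose : ((n + 1).choose (m 0) * (m 1 + 1) : R) = n.choose (m 0) * (n + 1) := by
      have := Nat.choose_mul_succ_eq n (m 0)
      rw [show n + 1 - m 0 = m 1 + 1 by omega] at this
      exact_mod_cast congrArg Nat.cast this.symm
    rw [mul_right_comm, hchoose, nsmul_eq_mul, Nat.cast_succ, mul_comm (n.choose _ : R), mul_assoc]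
  · simp

theorem iterate_pderiv_binaryForm (n p q : ℕ) (c : ℕ → R) :
    (fun f ↦ pderiv 0 f)^[p] ((fun f ↦ pderiv 1 f)^[q] (binaryForm (n + p + q) c)) =
      (n + p + q).descFactorial (p + q) • binaryForm n fun i ↦ c (i + p) := by
  induction p generalizing n with
  | zero =>
    induction q generalizing n with
    | zero => simp
    | succ q ih =>
      simp only [Function.iterate_zero_apply, add_zero, zero_add] at ih ⊢
      rw [Function.iterate_succ_apply', ← add_assoc n, add_right_comm n, ih, map_nsmul,
        pderiv_one_binaryForm, smul_smul, Nat.descFactorial_succ, Nat.add_sub_cancel, mul_comm]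
  | succ p ih =>
    rw [Function.iterate_succ_apply', ← add_assoc n, add_right_comm n, ih, map_nsmul,
      pderiv_zero_binaryForm, smul_smul, add_right_comm p, Nat.descFactorial_succ,
      add_assoc (n + 1), Nat.add_sub_cancel, mul_comm]
    simp only [add_right_comm _ 1, add_assoc]

theorem choose_mul_choose_sub_comm (n a b : ℕ) :
    n.choose a * (n - a).choose b = n.choose b * (n - b).choose a := by
  have ha := n.choose_mul (Nat.le_add_right a b)
  have hb := n.choose_mul (Nat.le_add_left b a)
  rwa [Nat.add_sub_cancel_left, Nat.choose_symm_add, hb, Nat.add_sub_cancel, eq_comm] at ha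

theorem choose_add_mul_choose_mul_choose {p q l i : ℕ} (hi : i ≤ q) (hil : i ≤ l) :
    (p + q).choose q * (p.choose (l - i) * q.choose i) =
      (p + q).choose l * (l.choose i * (p + q - l).choose (q - i)) := by
  have hp : p + q - i - (q - i) = p := by omega
  have hl : p + q - i - (l - i) = p + q - l := by omega
  calc
    (p + q).choose q * (p.choose (l - i) * q.choose i)
    _ = (p + q).choose i * ((p + q - i).choose (q - i) * p.choose (l - i)) := by
      rw [mul_comm (p.choose _), ← mul_assoc, Nat.choose_mul hi, mul_assoc]
    _ = (p + q).choose i * ((p + q - i).choose (l - i) * (p + q - l).choose (q - i)) := by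
      rw [← hl, ← choose_mul_choose_sub_comm, hp]
    _ = (p + q).choose l * (l.choose i * (p + q - l).choose (q - i)) := by
      rw [← mul_assoc, ← Nat.choose_mul hil, mul_assoc]

/-- Up to the factor `(p + q choose q)`, the binomially normalised coefficients of the product of
two binary forms of degrees `p` and `q`. That factor keeps the formula free of denominators. -/
def mulCoeff (p q : ℕ) (c d : ℕ → R) (l : ℕ) : R :=
  ∑ i ∈ range (q + 1), l.choose i * (p + q - l).choose (q - i) * (c (l - i) * d i)

theorem binomialPolynomial_mul (p q : ℕ) (c d : ℕ → R) :
    (p + q).choose q • (binomialPolynomial p c * binomialPolynomial q d) =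
      binomialPolynomial (p + q) (mulCoeff p q c d) := by
  ext l
  have hsum : binomialPolynomial q d =
      ∑ i ∈ range (q + 1), Polynomial.C (q.choose i * d i) * Polynomial.X ^ i := by
    simp [binomialPolynomial, ← Polynomial.C_mul_X_pow_eq_monomial, mul_assoc]
  rw [coeff_binomialPolynomial, mulCoeff, hsum, mul_sum, smul_sum, Polynomial.finsetSum_coeff,
    mul_sum]
  refine sum_congr rfl fun i hi ↦ ?_
  rw [Polynomial.coeff_smul, ← mul_assoc, Polynomial.coeff_mul_X_pow', Polynomial.coeff_mul_C,
    coeff_binomialPolynomial]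
  split_ifs with hil
  · have hchoose := congrArg (Nat.cast (R := R))
      (choose_add_mul_choose_mul_choose (p := p) (mem_range_succ_iff.mp hi) hil)
    push_cast at hchoose
    simp only [nsmul_eq_mul]
    linear_combination c (l - i) * d i * hchoose
  · simp [Nat.choose_eq_zero_of_lt (not_le.mp hil)]

theorem binaryForm_mul (p q : ℕ) (c d : ℕ → R) :
    (p + q).choose q • (binaryForm p c * binaryForm q d) =
      binaryForm (p + q) (mulCoeff p q c d) := by
  simp only [binaryForm, LinearMap.comp_apply, ← binomialPolynomial_mul, map_nsmul,
    Polynomial.homogenizeLM_apply]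
  rw [Polynomial.homogenize_mul _ _ (natDegree_binomialPolynomial_le p c)
    (natDegree_binomialPolynomial_le q d)]

theorem choose_smul_iterate_pderiv_binaryForm_mul (p q i j : ℕ) (c d : ℕ → R) :
    (p + q).choose q •
      ((fun f ↦ pderiv 0 f)^[i] ((fun f ↦ pderiv 1 f)^[j] (binaryForm (p + (i + j)) c)) *
        (fun f ↦ pderiv 0 f)^[j] ((fun f ↦ pderiv 1 f)^[i] (binaryForm (q + (i + j)) d))) =
      ((p + (i + j)).descFactorial (i + j) * (q + (i + j)).descFactorial (i + j)) •
        binaryForm (p + q) (mulCoeff p q (fun l ↦ c (l + i)) fun l ↦ d (l + j)) := by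
  have hc := iterate_pderiv_binaryForm p i j c
  have hd := iterate_pderiv_binaryForm q j i d
  rw [add_comm j] at hd
  rw [← add_assoc, hc, ← add_assoc, add_right_comm q, hd, ← binaryForm_mul, smul_mul_smul_comm,
    smul_comm]

/-- Up to the factor `(p + q choose q)`, the binomially normalised coefficients of the `r`-th
transvectant of two binary forms of degrees `p + r` and `q + r`. -/
def transvectantCoeff (p q r : ℕ) (c d : ℕ → R) : ℕ → R :=
  ∑ j ∈ range (r + 1),
    ((-1 : R) ^ j * r.choose j) • mulCoeff p q (fun i ↦ c (i + (r - j))) (fun i ↦ d (i + j))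

theorem comp_transvectantCoeff {F : Type*} [FunLike F R S] [RingHomClass F R S] (φ : F)
    (p q r : ℕ) (c d : ℕ → R) :
    φ ∘ transvectantCoeff p q r c d = transvectantCoeff p q r (φ ∘ c) (φ ∘ d) := by
  ext l
  simp [transvectantCoeff, mulCoeff]

variable {k : Type*} [Field k] [Algebra k R]

theorem transvectantCoeff_smul_left (p q r : ℕ) (a : k) (c d : ℕ → R) :
    transvectantCoeff p q r (a • c) d = a • transvectantCoeff p q r c d := by
  ext l
  simp [transvectantCoeff, mulCoeff, ← smul_sum]

theorem transvectantCoeff_smul_right (p q r : ℕ) (b : k) (c d : ℕ → R) :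
    transvectantCoeff p q r c (b • d) = b • transvectantCoeff p q r c d := by
  ext l
  simp [transvectantCoeff, mulCoeff, ← smul_sum]

theorem choose_smul_transvectantA_binaryForm [CharZero k] (p q r : ℕ) (c d : ℕ → R) :
    (p + q).choose q •
      transvectantA k R (p + r) (q + r) r (binaryForm (p + r) c) (binaryForm (q + r) d) =
        binaryForm (p + q) (transvectantCoeff p q r c d) := by
  have hterm : ∀ j ∈ range (r + 1), (p + q).choose q • (C ((-1 : R) ^ j * (r.choose j : R)) *
      (fun f ↦ pderiv 0 f)^[r - j] ((fun f ↦ pderiv 1 f)^[j] (binaryForm (p + r) c)) *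
      (fun f ↦ pderiv 0 f)^[j] ((fun f ↦ pderiv 1 f)^[r - j] (binaryForm (q + r) d))) =
        ((p + r).descFactorial r * (q + r).descFactorial r) •
          binaryForm (p + q) (((-1 : R) ^ j * r.choose j) •
            mulCoeff p q (fun i ↦ c (i + (r - j))) fun i ↦ d (i + j)) := by
    intro j hj
    obtain ⟨i, rfl⟩ := Nat.exists_eq_add_of_le' (mem_range_succ_iff.mp hj)
    rw [Nat.add_sub_cancel, mul_assoc, ← mul_smul_comm,
      choose_smul_iterate_pderiv_binaryForm_mul, mul_smul_comm, map_smul, smul_eq_C_mul]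
  have hfactorial (n : ℕ) : (n + r).factorial = n.factorial * (n + r).descFactorial r := by
    simpa using (Nat.factorial_mul_descFactorial (Nat.le_add_left r n)).symm
  have hconst : (((q.factorial * p.factorial : ℕ) : k) /
      (((p + r).factorial * (q + r).factorial : ℕ) : k)) *
        ((p + r).descFactorial r * (q + r).descFactorial r : ℕ) = 1 := by
    rw [div_mul_eq_mul_div, ← Nat.cast_mul, div_eq_one_iff_eq (mod_cast (by positivity)),
      hfactorial, hfactorial]
    congr 1
    ring
  rw [transvectantA, Nat.add_sub_cancel, Nat.add_sub_cancel, ← mul_smul_comm, smul_sum,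
    sum_congr rfl hterm, ← smul_sum, ← map_sum, mul_smul_comm, ← smul_mul_assoc, ← map_nsmul,
    ← map_nsmul, nsmul_eq_mul', hconst, map_one, map_one, one_mul, transvectantCoeff]

theorem transvectantA_binaryForm [CharZero k] (p q r : ℕ) (c d : ℕ → R) :
    transvectantA k R (p + r) (q + r) r (binaryForm (p + r) c) (binaryForm (q + r) d) =
      binaryForm (p + q) (((p + q).choose q : k)⁻¹ • transvectantCoeff p q r c d) := by
  have hchoose : ((p + q).choose q : k) ≠ 0 :=
    mod_cast (Nat.choose_pos (Nat.le_add_left q p)).ne'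
  rw [LinearMap.map_smul_of_tower, eq_inv_smul_iff₀ hchoose, Nat.cast_smul_eq_nsmul,
    choose_smul_transvectantA_binaryForm]

theorem constantCoeff_transvectantA_binaryForm [CharZero k] (r : ℕ) (c d : ℕ → R) :
    constantCoeff (transvectantA k R r r r (binaryForm r c) (binaryForm r d)) =
      transvectantCoeff 0 0 r c d 0 := by
  have h := transvectantA_binaryForm (k := k) 0 0 r c d
  rw [zero_add] at h
  simp [h, constantCoeff_eq, coeff_binaryForm]

end Transvectant

section Octavic

open DualNumber

section Coefficients

variable {R S : Type*} [CommRing R] [CommRing S]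

/-- The covariant `g = (f, f)^4` on coefficient sequences, up to a rational factor. -/
def covgCoeff (f : ℕ → R) : ℕ → R := transvectantCoeff 4 4 4 f f

/-- The covariant `κ = (f, f)^6` on coefficient sequences, up to a rational factor. -/
def covkCoeff (f : ℕ → R) : ℕ → R := transvectantCoeff 2 2 6 f f

/-- The covariant `h = (κ, κ)^2` on coefficient sequences, up to a rational factor. -/
def covhCoeff (f : ℕ → R) : ℕ → R := transvectantCoeff 2 2 2 (covkCoeff f) (covkCoeff f)

/-- The covariant `m = (f, κ)^4` on coefficient sequences, up to a rational factor. -/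
def covmCoeff (f : ℕ → R) : ℕ → R := transvectantCoeff 4 0 4 f (covkCoeff f)

/-- The invariants `J_2, ..., J_7` on coefficient sequences, up to the rational factors
`octavicScale`. -/
def octavicInvariants (f : ℕ → R) : Fin 6 → R :=
  ![transvectantCoeff 0 0 8 f f 0,
    transvectantCoeff 0 0 8 f (covgCoeff f) 0,
    transvectantCoeff 0 0 4 (covkCoeff f) (covkCoeff f) 0,
    transvectantCoeff 0 0 4 (covmCoeff f) (covkCoeff f) 0,
    transvectantCoeff 0 0 4 (covkCoeff f) (covhCoeff f) 0,
    transvectantCoeff 0 0 4 (covmCoeff f) (covhCoeff f) 0]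

theorem map_octavicInvariants {F : Type*} [FunLike F R S] [RingHomClass F R S] (φ : F)
    (f : ℕ → R) (i : Fin 6) :
    φ (octavicInvariants f i) = octavicInvariants (φ ∘ f) i := by
  have hmap (p q r : ℕ) (c d : ℕ → R) : φ (transvectantCoeff p q r c d 0) =
      transvectantCoeff p q r (φ ∘ c) (φ ∘ d) 0 :=
    congr_fun (comp_transvectantCoeff φ p q r c d) 0
  fin_cases i <;>
    simp [octavicInvariants, covgCoeff, covkCoeff, covhCoeff, covmCoeff, hmap,
      comp_transvectantCoeff]

end Coefficients

section DualNumber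

variable {R S : Type*} [CommRing R] [CommRing S]

/-- The ring homomorphism `R[ε] → S[ε]` induced by a ring homomorphism `R → S`. -/
def dualNumberMap (f : R →+* S) : R[ε] →+* S[ε] where
  toFun x := TrivSqZeroExt.inl (f x.fst) + TrivSqZeroExt.inr (f x.snd)
  map_zero' := by simp
  map_one' := by simp
  map_add' x y := by ext <;> simp
  map_mul' x y := by ext <;> simp

theorem fst_dualNumberMap (f : R →+* S) (x : R[ε]) : (dualNumberMap f x).fst = f x.fst := by
  simp [dualNumberMap]

theorem snd_dualNumberMap (f : R →+* S) (x : R[ε]) : (dualNumberMap f x).snd = f x.snd := by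
  simp [dualNumberMap]

end DualNumber

/-- The normalised coefficients of the octavic `56 X ^ 3 Y ^ 5 + 28 X ^ 6 Y ^ 2`, the `j`-th of
`a_0, a_1, a_2, a_3, a_4, a_8` being perturbed to first order. -/
def perturbedOctavic (j : Fin 6) : ℕ → ℤ[ε] :=
  Pi.single 3 1 + Pi.single 6 1 + Pi.single (![0, 1, 2, 3, 4, 8] j : ℕ) ε

theorem perturbedOctavic_eq_zero (j : Fin 6) {i : ℕ} (hi : 8 < i) : perturbedOctavic j i = 0 := by
  have hj : i ≠ ![0, 1, 2, 3, 4, 8] j := by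
    fin_cases j <;> simp <;> omega
  simp [perturbedOctavic, hj, show i ≠ 3 by omega, show i ≠ 6 by omega]

/-- The derivatives of the six `octavicInvariants` along the six directions of `perturbedOctavic`.
The derivative of `J_d` with respect to `a_s` vanishes unless `d ≡ s [MOD 3]`: for `ζ ^ 3 = 1` the
substitution `X ↦ ζ X` fixes the unperturbed octavic and multiplies `J_d` by `ζ ^ d`. -/
def octavicJacobian : Matrix (Fin 6) (Fin 6) ℤ :=
  !![0, 0, 56, 0, 0, 0;
    1260, 0, 0, 20160, 0, 0;
    0, 12960, 0, 0, -30240, 0;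
    0, 0, 111168, 0, 0, 14400;
    -1259712, 0, 0, 50388480, 0, 0;
    0, 35085312, 0, 0, 113218560, 0]

theorem snd_octavicInvariants_perturbedOctavic :
    (Matrix.of fun i j ↦ (octavicInvariants (perturbedOctavic j) i).snd) = octavicJacobian := by
  decide +kernel

theorem det_octavicJacobian_ne_zero : octavicJacobian.det ≠ 0 := by
  simp [octavicJacobian, Matrix.det_succ_row_zero, Fin.sum_univ_succ, Fin.succAbove]

variable (k : Type*) [Field k]

/-- The binomially normalised coefficients of the generic octavic. They vanish for `i > 8`, where
`8 choose i` and hence its inverse is `0`. -/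
def genericCoeff (i : ℕ) : MvPolynomial (Fin 9) k :=
  (Nat.choose 8 i : k)⁻¹ • X (Fin.ofNat 9 i)

/-- The evaluation of `k[a_0, ..., a_8]` at the octavic with normalised coefficients `c`,
which lie in a `k`-algebra. -/
def evalOctavic {A : Type*} [CommRing A] [Algebra k A] (c : ℕ → A) :
    MvPolynomial (Fin 9) k →ₐ[k] A :=
  aeval fun s ↦ (Nat.choose 8 s : A) * c s

/-- The evaluation of `k[a_0, ..., a_8]` at the `j`-th perturbed octavic. -/
def evalPerturbedOctavic (j : Fin 6) : MvPolynomial (Fin 9) k →ₐ[k] k[ε] :=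
  evalOctavic k (dualNumberMap (Int.castRingHom k) ∘ perturbedOctavic j)

theorem fst_evalPerturbedOctavic_X (j : Fin 6) (s : Fin 9) :
    (evalPerturbedOctavic k j (X s)).fst =
      Nat.choose 8 s * ((Pi.single 3 1 + Pi.single 6 1 : ℕ → ℤ) s : k) := by
  simp [evalPerturbedOctavic, evalOctavic, fst_dualNumberMap, perturbedOctavic, Pi.single_apply,
    apply_ite TrivSqZeroExt.fst]

variable [CharZero k]

theorem evalOctavic_comp_genericCoeff {A : Type*} [CommRing A] [Algebra k A] {c : ℕ → A}
    (hc : ∀ i > 8, c i = 0) : evalOctavic k c ∘ genericCoeff k = c := by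
  ext i
  rw [Function.comp_apply, genericCoeff, map_smul]
  rcases le_or_gt i 8 with hi | hi
  · have hchoose : (Nat.choose 8 i : k) ≠ 0 := mod_cast (Nat.choose_pos hi).ne'
    rw [evalOctavic, aeval_X, inv_smul_eq_iff₀ hchoose, Nat.cast_smul_eq_nsmul, nsmul_eq_mul,
      Fin.val_ofNat, Nat.mod_eq_of_lt (Nat.lt_succ_of_le hi)]
  · rw [Nat.choose_eq_zero_of_lt hi, Nat.cast_zero, inv_zero, zero_smul, hc i hi]

theorem genOct_eq_binaryForm : genOct k = binaryForm 8 (genericCoeff k) := by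
  rw [binaryForm_apply, ← Fin.sum_univ_eq_sum_range, genOct]
  refine Finset.sum_congr rfl fun i _ ↦ ?_
  have hchoose : (Nat.choose 8 i : k) ≠ 0 := mod_cast (Nat.choose_pos (Fin.is_le i)).ne'
  have hcoeff : X i = (Nat.choose 8 i : MvPolynomial (Fin 9) k) * genericCoeff k i := by
    rw [genericCoeff, ← nsmul_eq_mul, ← Nat.cast_smul_eq_nsmul k, smul_inv_smul₀ hchoose,
      Fin.ofNat_eq_cast, Fin.cast_val_eq_self]
  rw [← hcoeff]

theorem covgP_eq_binaryForm :
    covgP k = binaryForm 8 ((70 : k)⁻¹ • covgCoeff (genericCoeff k)) := by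
  rw [covgP, genOct_eq_binaryForm]
  exact transvectantA_binaryForm 4 4 4 _ _

theorem covkP_eq_binaryForm :
    covkP k = binaryForm 4 ((6 : k)⁻¹ • covkCoeff (genericCoeff k)) := by
  rw [covkP, genOct_eq_binaryForm]
  exact transvectantA_binaryForm 2 2 6 _ _

theorem covhP_eq_binaryForm :
    covhP k = binaryForm 4 ((216 : k)⁻¹ • covhCoeff (genericCoeff k)) := by
  rw [covhP, covkP_eq_binaryForm]
  refine (transvectantA_binaryForm 2 2 2 _ _).trans ?_
  rw [transvectantCoeff_smul_left, transvectantCoeff_smul_right, smul_smul, smul_smul, covhCoeff]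
  norm_num [Nat.choose]

theorem covmP_eq_binaryForm :
    covmP k = binaryForm 4 ((6 : k)⁻¹ • covmCoeff (genericCoeff k)) := by
  rw [covmP, covkP_eq_binaryForm, genOct_eq_binaryForm]
  refine (transvectantA_binaryForm 4 0 4 _ _).trans ?_
  rw [transvectantCoeff_smul_right, Nat.choose_zero_right, Nat.cast_one, inv_one, one_smul,
    covmCoeff]

/-- The rational factors relating `J_2, ..., J_7` to `octavicInvariants`. -/
def octavicScale : Fin 6 → k :=
  ![2 ^ 2 * 5 * 7, 2 ^ 4 * 5 ^ 2 * 7 ^ 3 / 3 * 70⁻¹, 2 ^ 9 * 3 * 7 ^ 4 * (6⁻¹ * 6⁻¹),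
    2 ^ 9 * 5 * 7 ^ 5 * (6⁻¹ * 6⁻¹), 2 ^ 14 * 3 ^ 2 * 7 ^ 6 * (216⁻¹ * 6⁻¹),
    2 ^ 14 * 3 * 5 * 7 ^ 7 * (216⁻¹ * 6⁻¹)]

theorem octavicScale_ne_zero (i : Fin 6) : octavicScale k i ≠ 0 := by
  fin_cases i <;> simp [octavicScale]

theorem J_eq_octavicScale_smul_octavicInvariants (i : Fin 6) :
    ![JP2 k, JP3 k, JP4 k, JP5 k, JP6 k, JP7 k] i =
      octavicScale k i • octavicInvariants (genericCoeff k) i := by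
  fin_cases i <;>
    simp [JP2, JP3, JP4, JP5, JP6, JP7, genOct_eq_binaryForm, covgP_eq_binaryForm,
      covkP_eq_binaryForm, covhP_eq_binaryForm, covmP_eq_binaryForm,
      constantCoeff_transvectantA_binaryForm, transvectantCoeff_smul_left,
      transvectantCoeff_smul_right, octavicScale, octavicInvariants, smul_eq_C_mul, mul_assoc,
      map_ofNat C, -map_smul, -LinearMap.map_smul_of_tower]

theorem snd_evalPerturbedOctavic_J (i j : Fin 6) :
    (evalPerturbedOctavic k j (![JP2 k, JP3 k, JP4 k, JP5 k, JP6 k, JP7 k] i)).snd =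
      octavicScale k i * octavicJacobian.map (Int.castRingHom k) i j := by
  have hzero : ∀ s > 8, (dualNumberMap (Int.castRingHom k) ∘ perturbedOctavic j) s = 0 := by
    intro s hs
    rw [Function.comp_apply, perturbedOctavic_eq_zero j hs, map_zero]
  rw [J_eq_octavicScale_smul_octavicInvariants, map_smul, TrivSqZeroExt.snd_smul, smul_eq_mul,
    map_octavicInvariants, evalPerturbedOctavic, evalOctavic_comp_genericCoeff k hzero,
    ← map_octavicInvariants, snd_dualNumberMap, ← snd_octavicInvariants_perturbedOctavic,
    Matrix.map_apply, Matrix.of_apply]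

end Octavic

theorem J_algebraically_independent_general (k : Type*) [Field k] [CharZero k] :
    AlgebraicIndependent k ![JP2 k, JP3 k, JP4 k, JP5 k, JP6 k, JP7 k] := by
  refine algebraicIndependent_of_det_snd_ne_zero (evalPerturbedOctavic k)
    (fst_evalPerturbedOctavic_X k) ?_
  simp_rw [snd_evalPerturbedOctavic_J]
  rw [Matrix.det_mul_column, ← RingHom.mapMatrix_apply, ← RingHom.map_det]
  exact mul_ne_zero (Finset.prod_ne_zero_iff.mpr fun i _ ↦ octavicScale_ne_zero k i)
    (Int.cast_ne_zero.mpr det_octavicJacobian_ne_zero)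

/-- The invariants `J_2, ..., J_7`, viewed as polynomials in the coefficients
`a_0, ..., a_8` of the generic binary octavic, are algebraically independent over `k`. -/
theorem J_algebraically_independent (k : Type*) [Field k] [IsAlgClosed k] [CharZero k]
    (P : MvPolynomial (Fin 6) k)
    (hP : aeval ![JP2 k, JP3 k, JP4 k, JP5 k, JP6 k, JP7 k] P = 0) :
    P = 0 :=
  algebraicIndependent_iff.mp (J_algebraically_independent_general k) P hP

end
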